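/- Let k be an algebraically closed field and let A and B be two complete Noetherian local commutative rings containing k such that the completed tensor product A⊗̂_k B is Noetherian. If A and B are integral domains, then A⊗̂_k B is an integral domain. -/

import Mathlib

open TensorProduct

/-- The ideal `r = m ⊗ B + A ⊗ n` of `C = A ⊗[k] B`, where `m` and `n` are the Jacobson
radicals of `A` and `B` (for a local ring, the Jacobson radical is the maximal ideal). -/
noncomputable def tensorRadical (k A B : Type*) [Field k] [CommRing A] [CommRing B]
    [Algebra k A] [Algebra k B] : Ideal (A ⊗[k] B) :=
  Ideal.map (Algebra.TensorProduct.includeLeft (R := k) (S := k) (A := A) (B := B))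
      ((⊥ : Ideal A).jacobson) ⊔
    Ideal.map (Algebra.TensorProduct.includeRight (R := k) (A := A) (B := B))
      ((⊥ : Ideal B).jacobson)

/-- The completed tensor product `A ⊗̂[k] B`: the `r`-adic separated completion of
`C = A ⊗[k] B`, i.e. the inverse limit of the rings `C ⧸ r ^ i`. -/
noncomputable abbrev CompletedTensor (k A B : Type*) [Field k] [CommRing A] [CommRing B]
    [Algebra k A] [Algebra k B] : Type _ :=
  AdicCompletion (tensorRadical k A B) (A ⊗[k] B)

/-- homogeneous relation lemma -/
theorem quasiReg_aux {D : Type*} [CommRing D] (t s : D)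
    (ht : ∀ x, t * x = 0 → x = 0) (hs : ∀ x, t ∣ s * x → t ∣ x) (p : ℕ) :
    ∀ a : ℕ → D, ∑ i ∈ Finset.range (p + 1), a i * (t ^ i * s ^ (p - i)) = 0 →
      ∀ i ≤ p, a i ∈ Ideal.span {t, s} := by
  have hspow : ∀ n : ℕ, ∀ x, t ∣ s ^ n * x → t ∣ x := by
    intro n
    induction n with
    | zero => intro x hx; simpa using hx
    | succ n ih =>
      intro x hx
      apply ih
      apply hs
      rwa [pow_succ', mul_assoc] at hx
  have htI : t ∈ Ideal.span {t, s} := Ideal.subset_span (by simp)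
  have hsI : s ∈ Ideal.span {t, s} := Ideal.subset_span (by simp)
  induction p with
  | zero =>
    intro a h i hi
    obtain rfl : i = 0 := by omega
    simp at h
    simp [h]
  | succ p ih =>
    intro a h
    rw [Finset.sum_range_succ'] at h
    have e : ∀ i, a (i + 1) * (t ^ (i + 1) * s ^ (p + 1 - (i + 1))) =
        t * (a (i + 1) * (t ^ i * s ^ (p - i))) := by
      intro i
      rw [Nat.add_sub_add_right]; ring
    simp only [e, ← Finset.mul_sum, pow_zero, one_mul, Nat.sub_zero] at h
    have h0 : t ∣ a 0 := by
      apply hspow (p + 1)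
      refine ⟨-(∑ i ∈ Finset.range (p + 1), a (i + 1) * (t ^ i * s ^ (p - i))), ?_⟩
      linear_combination h
    obtain ⟨a', ha'⟩ := h0
    have h1 : ∑ i ∈ Finset.range (p + 1), a (i + 1) * (t ^ i * s ^ (p - i)) + a' * s ^ (p + 1) = 0 := by
      apply ht
      rw [ha'] at h
      linear_combination h
    have h2 := ih (fun i => a (i + 1) + if i = 0 then s * a' else 0) (by
      refine Eq.trans ?_ h1
      simp only [add_mul, Finset.sum_add_distrib]
      congr 1
      rw [Finset.sum_range_succ']
      simp
      ring)
    intro i hi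
    rcases i with _ | i
    · rw [ha']; exact Ideal.mul_mem_right _ _ htI
    · have := h2 i (by omega)
      split_ifs at this with h
      · exact (Ideal.add_mem_iff_left _ (Ideal.mul_mem_right _ _ hsI)).1 this
      · simpa using this

theorem homog_fin_two {D : Type*} [CommRing D] (x : Fin 2 → D) (F : MvPolynomial (Fin 2) D) (p : ℕ)
    (hF : F.IsHomogeneous p) : ∃ a : ℕ → D,
      MvPolynomial.eval x F = ∑ i ∈ Finset.range (p + 1), a i * (x 0 ^ i * x 1 ^ (p - i)) ∧
      ∀ m, F.coeff m ≠ 0 → m 0 ≤ p ∧ F.coeff m = a (m 0) := by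
  let μ : ℕ → (Fin 2 →₀ ℕ) := fun i => Finsupp.equivFunOnFinite.symm ![i, p - i]
  have hm : ∀ m, F.coeff m ≠ 0 → m 0 ≤ p ∧ m = μ (m 0) := by
    intro m h
    have := hF h
    rw [Finsupp.weight_apply, Finsupp.sum_fintype _ _ (by simp)] at this
    simp [Fin.sum_univ_two] at this
    refine ⟨by omega, ?_⟩
    ext j
    fin_cases j
    · simp [μ]
    · simp [μ]; omega
  refine ⟨fun i => F.coeff (μ i), ?_, ?_⟩
  · rw [MvPolynomial.eval_eq']
    have hinj : ∀ i j, μ i = μ j → i = j := by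
      intro i j h
      have := DFunLike.congr_fun h 0
      simpa [μ] using this
    rw [Finset.sum_subset (s₁ := F.support) (s₂ := (Finset.range (p+1)).image μ)]
    · rw [Finset.sum_image (fun i _ j _ h => hinj i j h)]
      simp [Fin.prod_univ_two, μ]
    · intro m h
      have := hm m (by simpa using h)
      exact Finset.mem_image.2 ⟨m 0, by simp; omega, this.2.symm⟩
    · intro m _ h
      simp at h
      simp [h]
  · intro m h
    exact ⟨(hm m h).1, congrArg F.coeff (hm m h).2⟩

theorem quasiReg_map {D : Type*} [CommRing D] (t s : D)
    (ht : ∀ x, t * x = 0 → x = 0) (hs : ∀ x, t ∣ s * x → t ∣ x) (p : ℕ)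
    (F : MvPolynomial (Fin 2) D) (hF : F.IsHomogeneous p)
    (h : MvPolynomial.eval ![t, s] F ∈ Ideal.span {t, s} ^ (p + 1)) :
    MvPolynomial.map (Ideal.Quotient.mk (Ideal.span {t, s})) F = 0 := by
  have hrange : Set.range ![t, s] = {t, s} := by simp [Set.pair_comm]
  obtain ⟨a, ha, ha'⟩ := homog_fin_two ![t, s] F p hF
  -- write the value as sum with coefficients in I
  have h' : ∃ b : ℕ → D, (∀ i, b i ∈ Ideal.span {t, s}) ∧ MvPolynomial.eval ![t, s] F =
      ∑ i ∈ Finset.range (p + 1), b i * (t ^ i * s ^ (p - i)) := by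
    rw [pow_succ'] at h
    refine Submodule.mul_induction_on h ?_ ?_
    · intro m hm n hn
      rw [← hrange, Ideal.mem_span_pow_iff_exists_isHomogeneous] at hn
      obtain ⟨G, hG, rfl⟩ := hn
      obtain ⟨c, hc, -⟩ := homog_fin_two ![t, s] G p hG
      refine ⟨fun i => m * c i, fun i => Ideal.mul_mem_right _ _ hm, ?_⟩
      rw [hc, Finset.mul_sum]
      simp [mul_assoc]
    · rintro x y ⟨b, hb, rfl⟩ ⟨c, hc, rfl⟩
      refine ⟨fun i => b i + c i, fun i => add_mem (hb i) (hc i), ?_⟩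
      simp only [add_mul, Finset.sum_add_distrib]
  obtain ⟨b, hb, hb'⟩ := h'
  have := quasiReg_aux t s ht hs p (fun i => a i - b i) (by
    simp only [sub_mul, Finset.sum_sub_distrib]
    rw [← hb', ha]; simp)
  ext m
  rw [MvPolynomial.coeff_map]
  by_cases hm : F.coeff m = 0
  · simp [hm]
  · obtain ⟨h1, h2⟩ := ha' m hm
    rw [MvPolynomial.coeff_zero, Ideal.Quotient.eq_zero_iff_mem, h2]
    have := add_mem (this _ h1) (hb (m 0))
    simpa using this

theorem eval_mem_of_map_eq_zero {D : Type*} [CommRing D] (I : Ideal D) (x : Fin 2 → D)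
    (hx : ∀ i, x i ∈ I) (p : ℕ)
    (F : MvPolynomial (Fin 2) D) (hF : F.IsHomogeneous p)
    (h : MvPolynomial.map (Ideal.Quotient.mk I) F = 0) : MvPolynomial.eval x F ∈ I ^ (p + 1) := by
  obtain ⟨a, ha, ha'⟩ := homog_fin_two x F p hF
  rw [MvPolynomial.eval_eq']
  apply Ideal.sum_mem
  intro m hm
  have h1 : F.coeff m ∈ I := by
    rw [← Ideal.Quotient.eq_zero_iff_mem, ← MvPolynomial.coeff_map, h, MvPolynomial.coeff_zero]
  have := hF (MvPolynomial.mem_support_iff.1 hm)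
  rw [Finsupp.weight_apply, Finsupp.sum_fintype _ _ (by simp)] at this
  simp [Fin.sum_univ_two] at this
  rw [pow_succ', Fin.prod_univ_two, ← this, pow_add]
  exact Ideal.mul_mem_mul h1 (Ideal.mul_mem_mul (Ideal.pow_mem_pow (hx 0) _)
    (Ideal.pow_mem_pow (hx 1) _))

theorem order_mul_aux {D : Type*} [CommRing D] (t s : D)
    (ht : ∀ x, t * x = 0 → x = 0) (hs : ∀ x, t ∣ s * x → t ∣ x)
    (hI : (Ideal.span {t, s}).IsPrime) (x y : D) (M N : ℕ)
    (hx : x ∉ Ideal.span {t, s} ^ M) (hy : y ∉ Ideal.span {t, s} ^ N) :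
    x * y ∉ Ideal.span {t, s} ^ (M + N) := by
  classical
  have hrange : Set.range ![t, s] = {t, s} := by simp [Set.pair_comm]
  have key : ∀ (x : D) (M : ℕ), x ∉ Ideal.span {t, s} ^ M →
      ∃ p, p + 1 ≤ M ∧ x ∈ Ideal.span {t, s} ^ p ∧ x ∉ Ideal.span {t, s} ^ (p + 1) := by
    intro x M hx
    have hex : ∃ n, x ∉ Ideal.span {t, s} ^ n := ⟨M, hx⟩
    have h0 : Nat.find hex ≠ 0 := by
      intro h
      have := Nat.find_spec hex
      rw [h] at this
      simp at this
    obtain ⟨p, hp⟩ := Nat.exists_eq_succ_of_ne_zero h0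
    refine ⟨p, ?_, ?_, ?_⟩
    · have := Nat.find_min' hex hx
      omega
    · have := Nat.find_min hex (m := p) (by omega)
      simpa using this
    · have := Nat.find_spec hex
      rwa [hp] at this
  obtain ⟨p, hp, hxp, hxp'⟩ := key x M hx
  obtain ⟨q, hq, hyq, hyq'⟩ := key y N hy
  intro hxy
  have hxy' : x * y ∈ Ideal.span {t, s} ^ (p + q + 1) := Ideal.pow_le_pow_right (by omega) hxy
  rw [← hrange, Ideal.mem_span_pow_iff_exists_isHomogeneous] at hxp hyq
  obtain ⟨F, hF, rfl⟩ := hxp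
  obtain ⟨G, hG, rfl⟩ := hyq
  rw [← map_mul] at hxy'
  have h := quasiReg_map t s ht hs (p + q) (F * G) (hF.mul hG) hxy'
  rw [map_mul] at h
  have : IsDomain (D ⧸ Ideal.span {t, s}) := Ideal.Quotient.isDomain _
  have hmem : ∀ i, ![t, s] i ∈ Ideal.span {t, s} := by
    intro i
    rw [← hrange]
    exact Ideal.subset_span ⟨i, rfl⟩
  rcases mul_eq_zero.1 h with h | h
  · exact hxp' (eval_mem_of_map_eq_zero _ _ hmem p F hF h)
  · exact hyq' (eval_mem_of_map_eq_zero _ _ hmem q G hG h)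

/-- product of two functionals -/
noncomputable def tensorFun {k V W : Type*} [Field k] [AddCommGroup V] [Module k V]
    [AddCommGroup W] [Module k W] (u : V →ₗ[k] k) (w : W →ₗ[k] k) : V ⊗[k] W →ₗ[k] k :=
  LinearMap.mul' k k ∘ₗ TensorProduct.map u w

@[simp] theorem tensorFun_tmul {k V W : Type*} [Field k] [AddCommGroup V] [Module k V]
    [AddCommGroup W] [Module k W] (u : V →ₗ[k] k) (w : W →ₗ[k] k) (x : V) (y : W) :
    tensorFun u w (x ⊗ₜ y) = u x * w y := by simp [tensorFun]

theorem tensorFun_map {k V W V' W' : Type*} [Field k] [AddCommGroup V] [Module k V]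
    [AddCommGroup W] [Module k W] [AddCommGroup V'] [Module k V']
    [AddCommGroup W'] [Module k W'] (u : V →ₗ[k] k) (w : W →ₗ[k] k)
    (f : V' →ₗ[k] V) (g : W' →ₗ[k] W) (x : V' ⊗[k] W') :
    tensorFun u w (TensorProduct.map f g x) = tensorFun (u ∘ₗ f) (w ∘ₗ g) x := by
  induction x with
  | zero => simp
  | tmul x y => simp
  | add x y hx hy => simp only [map_add, hx, hy]

theorem exists_tensorFun_ne_zero {k V W : Type*} [Field k] [AddCommGroup V] [Module k V]
    [AddCommGroup W] [Module k W] (x : V ⊗[k] W) (hx : x ≠ 0) :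
    ∃ (u : V →ₗ[k] k) (w : W →ₗ[k] k), tensorFun u w x ≠ 0 := by
  let bV := Module.Basis.ofVectorSpace k V
  let bW := Module.Basis.ofVectorSpace k W
  by_contra! h
  apply hx
  apply (bV.tensorProduct bW).repr.injective
  ext ⟨i, j⟩
  have : ∀ x : V ⊗[k] W, (bV.tensorProduct bW).repr x (i, j) =
      tensorFun (bV.coord i) (bW.coord j) x := by
    intro x
    induction x with
    | zero => simp
    | tmul x y => simp [mul_comm]
    | add x y hx hy => simp only [map_add, Finsupp.add_apply, hx, hy]
  rw [this, h]; simp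

/-- slice -/
noncomputable def sliceR {k A W : Type*} [Field k] [CommRing A] [Algebra k A]
    [AddCommGroup W] [Module k W] (w : W →ₗ[k] k) : A ⊗[k] W →ₗ[A] A :=
  (TensorProduct.AlgebraTensorModule.rid k A A).toLinearMap ∘ₗ
    TensorProduct.AlgebraTensorModule.map LinearMap.id w

@[simp] theorem sliceR_tmul {k A W : Type*} [Field k] [CommRing A] [Algebra k A]
    [AddCommGroup W] [Module k W] (w : W →ₗ[k] k) (a : A) (y : W) :
    sliceR w (a ⊗ₜ[k] y) = w y • a := by simp [sliceR]

theorem tensorFun_eq_sliceR {k A W : Type*} [Field k] [CommRing A] [Algebra k A]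
    [AddCommGroup W] [Module k W] (u : A →ₗ[k] k) (w : W →ₗ[k] k) (x : A ⊗[k] W) :
    tensorFun u w x = u (sliceR w x) := by
  induction x with
  | zero => simp
  | tmul x y => simp [mul_comm]
  | add x y hx hy => simp only [map_add, hx, hy]

theorem exists_adjoin_range {k L L' : Type*} [Field k] [CommRing L] [CommRing L']
    [Algebra k L] [Algebra k L'] (f : L ⊗[k] L') : ∃ s : Finset L, ∀ S : Subalgebra k L,
      (s : Set L) ⊆ S → f ∈ (Algebra.TensorProduct.map S.val (AlgHom.id k L')).range := by
  classical
  induction f with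
  | zero => exact ⟨∅, fun S _ => zero_mem _⟩
  | tmul x y =>
    refine ⟨{x}, fun S h => ⟨⟨x, h (by simp)⟩ ⊗ₜ y, by simp⟩⟩
  | add x y hx hy =>
    obtain ⟨s, hs⟩ := hx
    obtain ⟨s', hs'⟩ := hy
    refine ⟨s ∪ s', fun S h => add_mem (hs S ?_) (hs' S ?_)⟩
    · exact subset_trans (by simp) h
    · exact subset_trans (by simp) h

theorem exists_point {k S : Type*} [Field k] [IsAlgClosed k] [CommRing S] [Algebra k S] [IsDomain S]
    [Algebra.FiniteType k S] (a : S) (ha : a ≠ 0) : ∃ χ : S →ₐ[k] k, χ a ≠ 0 := by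
  have : IsJacobsonRing S := isJacobsonRing_of_finiteType (A := k)
  have h : a ∉ (⊥ : Ideal S).jacobson := by
    rw [← Ideal.radical_eq_jacobson]
    rw [(Ideal.isPrime_bot (α := S)).radical]
    simpa using ha
  rw [Ideal.jacobson, Ideal.mem_sInf] at h
  push Not at h
  obtain ⟨m, ⟨-, hm⟩, ham⟩ := h
  let _ : Field (S ⧸ m) := Ideal.Quotient.field m
  have : Algebra.FiniteType k (S ⧸ m) := inferInstance
  have : Module.Finite k (S ⧸ m) := finite_of_finite_type_of_isJacobsonRing k (S ⧸ m)
  let φ : (S ⧸ m) →ₐ[k] k := IsAlgClosed.lift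
  refine ⟨φ.comp (Ideal.Quotient.mkₐ k m), ?_⟩
  simp
  rwa [Ideal.Quotient.eq_zero_iff_mem]

theorem tensor_isDomain (k L L' : Type*) [Field k] [IsAlgClosed k] [CommRing L] [CommRing L']
    [Algebra k L] [Algebra k L'] [IsDomain L] [IsDomain L'] : IsDomain (L ⊗[k] L') := by
  have : Nontrivial (L ⊗[k] L') := inferInstance
  have : NoZeroDivisors (L ⊗[k] L') := by
    classical
    refine ⟨fun {f g} hfg => ?_⟩
    by_contra! hne
    obtain ⟨hf, hg⟩ := hne
    obtain ⟨s, hs⟩ := exists_adjoin_range f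
    obtain ⟨s', hs'⟩ := exists_adjoin_range g
    let S : Subalgebra k L := Algebra.adjoin k (s ∪ s' : Finset L)
    have hsub : ((s ∪ s' : Finset L) : Set L) ⊆ S := Algebra.subset_adjoin
    obtain ⟨f, rfl⟩ := hs S (subset_trans (by simp) hsub)
    obtain ⟨g, rfl⟩ := hs' S (subset_trans (by simp) hsub)
    have hft : Algebra.FiniteType k S := by
      rw [← Subalgebra.fg_iff_finiteType]
      exact ⟨_, rfl⟩
    have hinj : Function.Injective (Algebra.TensorProduct.map S.val (AlgHom.id k L')) := by
      have := Module.Flat.rTensor_preserves_injective_linearMap (M := L') S.val.toLinearMap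
        Subtype.val_injective
      exact this
    have hfg' : f * g = 0 := by
      apply hinj
      rw [map_mul, map_zero]; exact hfg
    have hf' : f ≠ 0 := by rintro rfl; simp at hf
    have hg' : g ≠ 0 := by rintro rfl; simp at hg
    have key : ∀ f : S ⊗[k] L', f ≠ 0 → ∃ a : S, a ≠ 0 ∧ ∀ χ : S →ₐ[k] k, χ a ≠ 0 →
        Algebra.TensorProduct.lift ((Algebra.ofId k L').comp χ) (AlgHom.id k L')
          (fun _ _ => Commute.all _ _) f ≠ 0 := by
      intro f hf
      obtain ⟨u, w, huw⟩ := exists_tensorFun_ne_zero f hf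
      refine ⟨sliceR w f, ?_, ?_⟩
      · intro h
        rw [tensorFun_eq_sliceR, h] at huw
        simp at huw
      · intro χ hχ h
        apply hχ
        have : ∀ f : S ⊗[k] L', χ (sliceR w f) = w (Algebra.TensorProduct.lift ((Algebra.ofId k L').comp χ) (AlgHom.id k L')
          (fun _ _ => Commute.all _ _) f) := by
          intro f
          induction f with
          | zero => simp
          | tmul x y =>
            simp only [sliceR_tmul, map_smul, Algebra.TensorProduct.lift_tmul, AlgHom.comp_apply,
              Algebra.ofId_apply, ← Algebra.smul_def, AlgHom.id_apply, smul_eq_mul]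
            exact mul_comm _ _
          | add x y hx hy => simp only [map_add, hx, hy]
        rw [this, h, map_zero]
    obtain ⟨a, ha, ha'⟩ := key f hf'
    obtain ⟨b, hb, hb'⟩ := key g hg'
    obtain ⟨χ, hχ⟩ := exists_point (k := k) (a * b) (mul_ne_zero ha hb)
    rw [map_mul] at hχ
    have := mul_ne_zero (ha' χ (left_ne_zero_of_mul hχ)) (hb' χ (right_ne_zero_of_mul hχ))
    rw [← map_mul, hfg', map_zero] at this
    exact this rfl
  exact NoZeroDivisors.to_isDomain _

/-- The curve-type target. -/
theorem order_mul_tensor (k R R' : Type*) [Field k] [IsAlgClosed k] [CommRing R] [CommRing R']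
    [Algebra k R] [Algebra k R'] (t : R) (s : R')
    (ht : ∀ x, t * x = 0 → x = 0) (hs : ∀ x, s * x = 0 → x = 0)
    (htp : (Ideal.span {t}).IsPrime) (hsp : (Ideal.span {s}).IsPrime) (x y : R ⊗[k] R') (M N : ℕ)
    (hx : x ∉ Ideal.span {t ⊗ₜ[k] (1 : R'), (1 : R) ⊗ₜ[k] s} ^ M)
    (hy : y ∉ Ideal.span {t ⊗ₜ[k] (1 : R'), (1 : R) ⊗ₜ[k] s} ^ N) :
    x * y ∉ Ideal.span {t ⊗ₜ[k] (1 : R'), (1 : R) ⊗ₜ[k] s} ^ (M + N) := by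
  have hL : ∀ (R R' : Type _) [CommRing R] [CommRing R'] [Algebra k R] [Algebra k R'] (t : R)
      (ht : ∀ x, t * x = 0 → x = 0) (x : R ⊗[k] R'), (t ⊗ₜ[k] (1 : R')) * x = 0 → x = 0 := by
    intro R R' _ _ _ _ t ht x hx
    have hinj : Function.Injective (LinearMap.mulLeft k t) := by
      rw [injective_iff_map_eq_zero]
      exact ht
    have h1 := Module.Flat.rTensor_preserves_injective_linearMap (M := R') _ hinj
    apply h1
    rw [map_zero, ← hx]
    generalize x = z
    induction z with
    | zero => simp
    | tmul x y => simp
    | add x y hx hy => simp only [map_add, hx, hy, mul_add]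
  have hR : ∀ (R R' : Type _) [CommRing R] [CommRing R'] [Algebra k R] [Algebra k R'] (s : R')
      (hs : ∀ x, s * x = 0 → x = 0) (x : R ⊗[k] R'), ((1 : R) ⊗ₜ[k] s) * x = 0 → x = 0 := by
    intro R R' _ _ _ _ t ht x hx
    have hinj : Function.Injective (LinearMap.mulLeft k t) := by
      rw [injective_iff_map_eq_zero]
      exact ht
    have h1 := Module.Flat.lTensor_preserves_injective_linearMap (M := R) _ hinj
    apply h1
    rw [map_zero, ← hx]
    generalize x = z
    induction z with
    | zero => simp
    | tmul x y => simp
    | add x y hx hy => simp only [map_add, hx, hy, mul_add]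
  apply order_mul_aux
  · exact hL R R' t ht
  · -- s is a nonzerodivisor modulo t
    let π : R ⊗[k] R' →ₐ[k] (R ⧸ Ideal.span {t}) ⊗[k] R' :=
      Algebra.TensorProduct.map (Ideal.Quotient.mkₐ k (Ideal.span {t})) (AlgHom.id k R')
    have hker : ∀ x, π x = 0 ↔ (t ⊗ₜ[k] (1 : R')) ∣ x := by
      intro x
      have := Algebra.TensorProduct.map_ker (Ideal.Quotient.mkₐ k (Ideal.span {t})) (AlgHom.id k R')
        (Ideal.Quotient.mkₐ_surjective _ _) (Function.surjective_id)
      have h2 := SetLike.ext_iff.1 this x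
      rw [RingHom.mem_ker] at h2
      rw [show π x = 0 ↔ _ from h2]
      have h3 : RingHom.ker (Ideal.Quotient.mkₐ k (Ideal.span {t})) = Ideal.span {t} :=
        by exact Ideal.Quotient.mkₐ_ker k _
      have h4 : RingHom.ker (AlgHom.id k R') = ⊥ := by ext; simp [RingHom.mem_ker]
      rw [h3, h4, Ideal.map_bot, sup_bot_eq, Ideal.map_span, Set.image_singleton,
        Ideal.mem_span_singleton]
      rfl
    intro x hx
    rw [← hker] at hx ⊢
    rw [map_mul] at hx
    apply hR _ _ s hs
    rw [← hx]
    simp [π]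
  · have hd1 : IsDomain (R ⧸ Ideal.span {t}) := Ideal.Quotient.isDomain _
    have hd2 : IsDomain (R' ⧸ Ideal.span {s}) := Ideal.Quotient.isDomain _
    have := tensor_isDomain k (R ⧸ Ideal.span {t}) (R' ⧸ Ideal.span {s})
    have h1 := Algebra.TensorProduct.map_ker (Ideal.Quotient.mkₐ k (Ideal.span {t}))
      (Ideal.Quotient.mkₐ k (Ideal.span {s}))
        (Ideal.Quotient.mkₐ_surjective _ _) (Ideal.Quotient.mkₐ_surjective _ _)
    have h3 : RingHom.ker (Ideal.Quotient.mkₐ k (Ideal.span {t})) = Ideal.span {t} :=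
        by exact Ideal.Quotient.mkₐ_ker k _
    have h4 : RingHom.ker (Ideal.Quotient.mkₐ k (Ideal.span {s})) = Ideal.span {s} :=
        by exact Ideal.Quotient.mkₐ_ker k _
    rw [h3, h4, Ideal.map_span, Set.image_singleton, Ideal.map_span, Set.image_singleton,
      ← Ideal.span_union, Set.singleton_union] at h1
    have h5 : Ideal.span {t ⊗ₜ[k] (1 : R'), (1 : R) ⊗ₜ[k] s} = _ := h1.symm
    rw [h5]
    exact RingHom.ker_isPrime _
  · exact hx
  · exact hy

theorem coheight_mul_le {O : Type*} [CommRing O] [IsDomain O] (x : O) (hx : x ≠ 0) (I : Ideal O) :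
    Module.length O (O ⧸ (Ideal.span {x} * I)) =
      Module.length O (O ⧸ I) + Module.length O (O ⧸ Ideal.span {x}) := by
  have hmem : ∀ z, z ∈ Ideal.span {x} * I ↔ ∃ y ∈ I, x * y = z := by
    intro z
    exact Ideal.mem_span_singleton_mul
  let f : (O ⧸ I) →ₗ[O] (O ⧸ (Ideal.span {x} * I)) :=
    Submodule.mapQ _ _ (LinearMap.mulLeft O x) (by
      intro y hy
      rw [Submodule.mem_comap, LinearMap.mulLeft_apply, hmem]
      exact ⟨y, hy, rfl⟩)
  let g : (O ⧸ (Ideal.span {x} * I)) →ₗ[O] (O ⧸ Ideal.span {x}) :=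
    Submodule.mapQ _ _ LinearMap.id (by
      intro y hy
      rw [Submodule.mem_comap]
      exact (Ideal.mul_le_left : Ideal.span {x} * I ≤ Ideal.span {x}) hy)
  have hf : ∀ y : O, f (Submodule.Quotient.mk y) = Submodule.Quotient.mk (x * y) := fun y => rfl
  have hg : ∀ y : O, g (Submodule.Quotient.mk y) = Submodule.Quotient.mk y := fun y => rfl
  refine Module.length_eq_add_of_exact f g ?_ ?_ ?_
  · rw [injective_iff_map_eq_zero]
    intro y hy
    obtain ⟨y, rfl⟩ := Submodule.Quotient.mk_surjective _ y
    rw [hf, Submodule.Quotient.mk_eq_zero, hmem] at hy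
    obtain ⟨z, hz, h⟩ := hy
    rw [Submodule.Quotient.mk_eq_zero, ← mul_left_cancel₀ hx h]
    exact hz
  · intro y
    obtain ⟨y, rfl⟩ := Submodule.Quotient.mk_surjective _ y
    exact ⟨Submodule.Quotient.mk y, rfl⟩
  · intro y
    obtain ⟨y, rfl⟩ := Submodule.Quotient.mk_surjective _ y
    rw [hg, Submodule.Quotient.mk_eq_zero, Ideal.mem_span_singleton]
    constructor
    · rintro ⟨z, rfl⟩
      exact ⟨Submodule.Quotient.mk z, rfl⟩
    · rintro ⟨z, hz⟩
      obtain ⟨z, rfl⟩ := Submodule.Quotient.mk_surjective _ z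
      rw [hf, Submodule.Quotient.eq, hmem] at hz
      obtain ⟨w, hw, h⟩ := hz
      exact ⟨z - w, by rw [mul_sub, h]; ring⟩

theorem common_denom {O V : Type*} [CommRing O] [IsDomain O] [CommRing V] (j : O →+* V)
    (hfrac : ∀ y : V, ∃ c : O, c ≠ 0 ∧ ∃ z : O, j z = j c * y) (y : ℕ → V) (n : ℕ) :
    ∃ c : O, c ≠ 0 ∧ ∃ z : ℕ → O, ∀ i ≤ n, j (z i) = j c * y i := by
  choose c hc z hz using hfrac
  refine ⟨∏ i ∈ Finset.range (n + 1), c (y i), ?_, ?_⟩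
  · exact Finset.prod_ne_zero_iff.2 fun i _ => hc _
  · refine ⟨fun i => (∏ l ∈ (Finset.range (n + 1)).erase i, c (y l)) * z (y i), fun i hi => ?_⟩
    rw [map_mul, hz, ← mul_assoc, ← map_mul, Finset.prod_erase_mul]
    simp; omega

theorem chain_bound {O V : Type*} [CommRing O] [IsDomain O] [CommRing V] [IsDomain V]
    (j : O →+* V) (hj : Function.Injective j)
    (hfrac : ∀ y : V, ∃ c : O, c ≠ 0 ∧ ∃ z : O, j z = j c * y)
    (hlen : ∀ I : Ideal O, I ≠ ⊥ → Module.length O (O ⧸ I) ≠ ⊤)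
    (x : O) (hx : x ≠ 0) : ∃ ℓ : ℕ, ∀ (n : ℕ) (y : ℕ → V), y 0 = j x →
      (∀ i < n, y (i + 1) ∣ y i ∧ ¬ y i ∣ y (i + 1)) → n ≤ ℓ := by
  obtain ⟨ℓ, hℓ⟩ := ENat.ne_top_iff_exists.1 (hlen (Ideal.span {x}) (by simpa using hx))
  refine ⟨ℓ, fun n y hy0 hy => ?_⟩
  obtain ⟨c, hc, z, hz⟩ := common_denom j hfrac y n
  have hjc : j c ≠ 0 := (map_ne_zero_iff j hj).2 hc
  let I : Ideal O := Ideal.span (z '' {i | i ≤ n})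
  have hzI : ∀ i ≤ n, z i ∈ I := fun i hi => Ideal.subset_span ⟨i, hi, rfl⟩
  let J : ℕ → Ideal O := fun i => I ⊓ (Ideal.span {j (z i)}).comap j
  have hz0 : z 0 = x * c := by
    apply hj
    rw [hz 0 (by omega), hy0, map_mul, mul_comm]
  have hz0' : z 0 ≠ 0 := by rw [hz0]; exact mul_ne_zero hx hc
  have hI : I ≠ ⊥ := by
    intro h
    have := hzI 0 (by omega)
    rw [h] at this
    exact hz0' this
  have hIc : I ≤ (Ideal.span {j c}).comap j := by
    rw [Ideal.span_le]
    rintro _ ⟨i, hi, rfl⟩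
    simp only [SetLike.mem_coe, Ideal.mem_comap, Ideal.mem_span_singleton]
    rw [hz i hi]
    exact dvd_mul_right _ _
  have h0 : Ideal.span {x} * I ≤ J 0 := by
    refine le_inf Ideal.mul_le_right ?_
    intro w hw
    rw [Ideal.mem_span_singleton_mul] at hw
    obtain ⟨v, hv, rfl⟩ := hw
    have := hIc hv
    rw [Ideal.mem_comap, Ideal.mem_span_singleton] at this ⊢
    rw [hz0, map_mul, map_mul]
    exact mul_dvd_mul_left _ this
  have hlt : ∀ i < n, J i < J (i + 1) := by
    intro i hi
    obtain ⟨h1, h2⟩ := hy i hi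
    refine lt_of_le_of_ne ?_ ?_
    · refine inf_le_inf_left _ (Ideal.comap_mono ?_)
      rw [Ideal.span_singleton_le_span_singleton, hz i (by omega), hz (i + 1) (by omega)]
      exact mul_dvd_mul_left _ h1
    · intro h
      have h3 : z (i + 1) ∈ J (i + 1) := by
        refine ⟨hzI _ (by omega), ?_⟩
        exact Ideal.mem_span_singleton_self _
      rw [← h] at h3
      have h4 := h3.2
      rw [SetLike.mem_coe, Ideal.mem_comap, Ideal.mem_span_singleton, hz i (by omega),
        hz (i + 1) (by omega)] at h4
      exact h2 ((mul_dvd_mul_iff_left hjc).1 h4)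
  have hcoh : ∀ i ≤ n, Order.coheight (J i) + i ≤ Order.coheight (J 0) := by
    intro i
    induction i with
    | zero => simp
    | succ i ih =>
      intro hi
      refine le_trans ?_ (ih (by omega))
      have := Order.coheight_add_one_le (hlt i (by omega))
      push_cast
      rw [add_comm (i : ℕ∞) 1, ← add_assoc]
      gcongr
  have h1 := hcoh n le_rfl
  have h2 : Order.coheight I ≤ Order.coheight (J n) := Order.coheight_anti inf_le_left
  have h3 : Order.coheight (J 0) ≤ Order.coheight (Ideal.span {x} * I) := Order.coheight_anti h0
  have h4 := coheight_mul_le x hx I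
  rw [← hℓ] at h4
  rw [Module.length_quotient, Module.length_quotient] at h4
  have h5 := hlen I hI
  rw [Module.length_quotient] at h5
  have h6 : Order.coheight I + n ≤ Order.coheight I + ℓ := by
    rw [← h4]
    exact le_trans (by gcongr) (le_trans h1 h3)
  have h7 := (ENat.add_le_add_iff_left h5).1 h6
  exact_mod_cast h7

theorem uniformizer {O V : Type*} [CommRing O] [IsDomain O] [CommRing V] [IsDomain V]
    [ValuationRing V]
    (j : O →+* V) (hj : Function.Injective j)
    (hfrac : ∀ y : V, ∃ c : O, c ≠ 0 ∧ ∃ z : O, j z = j c * y)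
    (hlen : ∀ I : Ideal O, I ≠ ⊥ → Module.length O (O ⧸ I) ≠ ⊤)
    (x : O) (hx : x ≠ 0) (hxV : ¬ IsUnit (j x)) :
    ∃ t : V, t ≠ 0 ∧ IsLocalRing.maximalIdeal V = Ideal.span {t} ∧
      ∀ a : O, a ≠ 0 → ∃ n, ¬ t ^ n ∣ j a := by
  have h1 : ∃ t : V, IsLocalRing.maximalIdeal V = Ideal.span {t} := by
    by_contra! hne
    have hstep : ∀ y : IsLocalRing.maximalIdeal V, ∃ y' : IsLocalRing.maximalIdeal V,
        (y' : V) ∣ y ∧ ¬ (y : V) ∣ y' := by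
      intro y
      by_contra! h
      apply hne y
      apply le_antisymm
      · intro y' hy'
        rw [Ideal.mem_span_singleton]
        rcases ValuationRing.dvd_total (y : V) y' with h' | h'
        · exact h'
        · exact h ⟨y', hy'⟩ h'
      · rw [Ideal.span_singleton_le_iff_mem]
        exact y.2
    choose F hF1 hF2 using hstep
    obtain ⟨ℓ, hℓ⟩ := chain_bound j hj hfrac hlen x hx
    let y : ℕ → IsLocalRing.maximalIdeal V := fun n => Nat.rec ⟨j x, hxV⟩ (fun _ z => F z) n
    have hy1 : ∀ i, (y (i + 1)).1 ∣
        (y i).1 := by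
      intro i; exact hF1 (y i)
    have hy2 : ∀ i, ¬ (y i).1 ∣
        (y (i + 1)).1 := by
      intro i; exact hF2 (y i)
    have := hℓ (ℓ + 1) (fun i => (y i).1) rfl (fun i _ => ⟨hy1 i, hy2 i⟩)
    omega
  obtain ⟨t, ht⟩ := h1
  have ht0 : t ≠ 0 := by
    rintro rfl
    have : j x ∈ IsLocalRing.maximalIdeal V := hxV
    rw [ht] at this
    simp at this
    rw [map_eq_zero_iff j hj] at this
    exact hx this
  have htu : ¬ IsUnit t := by
    have : t ∈ IsLocalRing.maximalIdeal V := by rw [ht]; exact Ideal.mem_span_singleton_self _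
    exact this
  refine ⟨t, ht0, ht, fun a ha => ?_⟩
  by_contra! h
  obtain ⟨ℓ, hℓ⟩ := chain_bound j hj hfrac hlen a ha
  have := hℓ (ℓ + 1) (fun i => if i = 0 then j a else t ^ (ℓ + 2 - i)) (by simp) (by
    intro i hi
    rcases i with _ | i
    · simp only [zero_add, one_ne_zero, if_true, if_false]
      refine ⟨h _, fun h' => ?_⟩
      have h2 := (h (ℓ + 2)).trans h'
      rw [pow_dvd_pow_iff ht0 htu] at h2
      omega
    · simp only [Nat.add_eq_zero_iff, one_ne_zero, and_false, if_false]
      rw [pow_dvd_pow_iff ht0 htu, pow_dvd_pow_iff ht0 htu]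
      omega)
  omega

theorem dim_one_of_forall_mem {O : Type*} [CommRing O] [IsDomain O] [IsNoetherianRing O]
    [IsLocalRing O] (a : O) (ha0 : a ≠ 0) (ha : a ∈ IsLocalRing.maximalIdeal O)
    (h : ∀ p : Ideal O, p.IsPrime → p ≠ ⊥ → a ∈ p) :
    ∀ p : Ideal O, p.IsPrime → p ≠ ⊥ → p = IsLocalRing.maximalIdeal O := by
  classical
  -- the maximal ideal lies in a minimal prime of `a`
  have hfin := Ideal.finite_minimalPrimes_of_isNoetherianRing O (Ideal.span {a})
  have hsub : (IsLocalRing.maximalIdeal O : Set O) ⊆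
      ⋃ i ∈ ((hfin.toFinset : Finset (Ideal O)) : Set (Ideal O)), ((id i : Ideal O) : Set O) := by
    intro y hy
    simp only [Set.mem_iUnion]
    by_cases hy0 : y = 0
    · obtain ⟨q, hq, -⟩ := Ideal.exists_minimalPrimes_le
        (I := Ideal.span {a}) (J := IsLocalRing.maximalIdeal O)
        (by rwa [Ideal.span_singleton_le_iff_mem])
      exact ⟨q, by simpa using hq, by simp [hy0]⟩
    · obtain ⟨q, hq, hqm⟩ := Ideal.exists_minimalPrimes_le
        (I := Ideal.span {y}) (J := IsLocalRing.maximalIdeal O)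
        (by rwa [Ideal.span_singleton_le_iff_mem])
      have hqp : q.IsPrime := hq.1.1
      have hyq : y ∈ q := by
        have := hq.1.2
        rwa [Ideal.span_singleton_le_iff_mem] at this
      have hq0 : q ≠ ⊥ := by rintro rfl; exact hy0 hyq
      have haq : a ∈ q := h q hqp hq0
      refine ⟨q, ?_, hyq⟩
      simp only [Set.Finite.coe_toFinset]
      have hh := Ideal.height_le_one_of_isPrincipal_of_mem_minimalPrimes (Ideal.span {y}) q hq
      refine ⟨⟨hqp, by rwa [Ideal.span_singleton_le_iff_mem]⟩, ?_⟩
      rintro q' ⟨hq'p, hq'a⟩ hle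
      by_contra hlt
      have hlt' : q' < q := lt_of_le_not_ge hle hlt
      have hq'0 : q' ≠ ⊥ := by
        rintro rfl
        rw [Ideal.span_singleton_le_iff_mem] at hq'a
        exact ha0 hq'a
      have h3 := Ideal.height_add_one_le_of_lt_of_isPrime hlt'
      have h4 : 1 ≤ q'.height := by
        rw [Order.one_le_iff_ne_zero]
        intro h0
        exact hq'0 (Ideal.height_eq_zero_iff_eq_bot.1 h0)
      have h5 : (1 : ℕ∞) + 1 ≤ 1 := le_trans (by gcongr) (h3.trans hh)
      exact absurd h5 (by decide)
  rw [Ideal.subset_union_prime ⊥ ⊥ (fun i hi _ _ => by simp at hi; exact hi.1.1)] at hsub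
  obtain ⟨q, hq, hle⟩ := hsub
  simp only [Set.Finite.mem_toFinset, id] at hq hle
  intro p hp hp0
  refine le_antisymm (IsLocalRing.le_maximalIdeal hp.ne_top) ?_
  refine hle.trans (hq.2 ⟨hp, ?_⟩ ((IsLocalRing.le_maximalIdeal hp.ne_top).trans hle))
  rw [Ideal.span_singleton_le_iff_mem]
  exact h p hp hp0

theorem length_ne_top {O : Type*} [CommRing O] [IsDomain O] [IsNoetherianRing O]
    [IsLocalRing O]
    (h : ∀ p : Ideal O, p.IsPrime → p ≠ ⊥ → p = IsLocalRing.maximalIdeal O) (I : Ideal O)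
    (hI : I ≠ ⊥) : Module.length O (O ⧸ I) ≠ ⊤ := by
  have : IsArtinianRing (O ⧸ I) := by
    rw [isArtinianRing_iff_krullDimLE_zero, Ring.krullDimLE_zero_iff]
    intro J hJ
    have hc : (J.comap (Ideal.Quotient.mk I)).IsPrime := Ideal.comap_isPrime _ _
    have h1 : J.comap (Ideal.Quotient.mk I) = IsLocalRing.maximalIdeal O := by
      apply h _ hc
      intro hb
      apply hI
      rw [eq_bot_iff, ← hb]
      intro x hx
      rw [Ideal.mem_comap, Ideal.Quotient.eq_zero_iff_mem.2 hx]
      exact zero_mem _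
    have h2 : (J.comap (Ideal.Quotient.mk I)).IsMaximal := by rw [h1]; infer_instance
    rw [← Ideal.map_comap_of_surjective _ Ideal.Quotient.mk_surjective J]
    refine (Ideal.map_eq_top_or_isMaximal_of_surjective _ Ideal.Quotient.mk_surjective
      h2).resolve_left ?_
    rw [Ideal.map_comap_of_surjective _ Ideal.Quotient.mk_surjective J]
    exact hJ.ne_top
  rw [Module.length_eq_of_surjective (R := O ⧸ I) Ideal.Quotient.mk_surjective]
  exact Module.length_ne_top

theorem exists_prime_dim_one {A : Type*} [CommRing A] [IsDomain A] [IsNoetherianRing A]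
    (a : A) (ha : a ≠ 0) : ∃ p : Ideal A, p.IsPrime ∧ a ∉ p ∧ 
      ∀ q : Ideal A, q.IsPrime → p < q → a ∈ q := by
  obtain ⟨p, ⟨hp1, hp2⟩, hp3⟩ := set_has_maximal_iff_noetherian.2 ‹IsNoetherianRing A›
    {p : Ideal A | p.IsPrime ∧ a ∉ p} ⟨⊥, Ideal.isPrime_bot, ha⟩
  refine ⟨p, hp1, hp2, fun q hq hlt => ?_⟩
  by_contra h
  exact hp3 q ⟨hq, h⟩ hlt

theorem exists_curve.{v, w} (k : Type w) (A : Type v) [Field k] [CommRing A] [IsDomain A]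
    [IsNoetherianRing A] [IsLocalRing A] [Algebra k A] (a : A) (ha : a ≠ 0) :
    ∃ (R : Type v) (_ : CommRing R) (_ : Algebra k R) (φ : A →ₐ[k] R) (t : R) (n : ℕ),
      (∀ x, t * x = 0 → x = 0) ∧ (Ideal.span {t}).IsPrime ∧
      (∀ y ∈ IsLocalRing.maximalIdeal A, φ y ∈ Ideal.span {t}) ∧ φ a ∉ Ideal.span {t} ^ n := by
  by_cases hm : IsLocalRing.maximalIdeal A = ⊥
  · refine ⟨Polynomial A, inferInstance, inferInstance, Polynomial.CAlgHom, Polynomial.X, 1,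
      ?_, ?_, ?_, ?_⟩
    · intro x hx
      simpa using hx
    · rw [Ideal.span_singleton_prime Polynomial.X_ne_zero]
      exact Polynomial.prime_X
    · intro y hy
      rw [hm] at hy
      rw [(Submodule.mem_bot A).1 hy, map_zero]
      exact zero_mem _
    · rw [pow_one, Ideal.mem_span_singleton, Polynomial.X_dvd_iff]
      simpa using ha
  · obtain ⟨y, hy, hy0⟩ := Submodule.exists_mem_ne_zero_of_ne_bot hm
    obtain ⟨p, hp, hap, hp'⟩ := exists_prime_dim_one (a * y) (mul_ne_zero ha hy0)
    let O := A ⧸ p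
    have : IsDomain O := Ideal.Quotient.isDomain p
    have : IsLocalRing O := IsLocalRing.of_surjective' _ (Ideal.Quotient.mk_surjective (I := p))
    let x : O := Ideal.Quotient.mk p (a * y)
    have hx : x ≠ 0 := by
      intro h
      exact hap (Ideal.Quotient.eq_zero_iff_mem.1 h)
    have hloc : IsLocalHom (Ideal.Quotient.mk p) :=
      IsLocalHom.of_surjective _ Ideal.Quotient.mk_surjective
    have hxm : x ∈ IsLocalRing.maximalIdeal O := by
      intro hu
      have := isUnit_of_map_unit (Ideal.Quotient.mk p) _ hu
      exact hy (isUnit_of_mul_isUnit_right this)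
    have hdim := dim_one_of_forall_mem x hx hxm (by
      intro q hq hq0
      have hc : (q.comap (Ideal.Quotient.mk p)).IsPrime := Ideal.comap_isPrime _ _
      apply hp' _ hc
      refine lt_of_le_of_ne ?_ ?_
      · intro z hz
        rw [Ideal.mem_comap, Ideal.Quotient.eq_zero_iff_mem.2 hz]
        exact zero_mem _
      · intro h
        apply hq0
        rw [← Ideal.map_comap_of_surjective _ Ideal.Quotient.mk_surjective q, ← h,
          Ideal.map_quotient_self])
    have hlen := length_ne_top hdim
    obtain ⟨V, hV, hVloc⟩ := IsLocalRing.exists_factor_valuationRing (algebraMap O (FractionRing O))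
    let j : O →+* V := (algebraMap O (FractionRing O)).codRestrict V.toSubring hV
    have hjv : ∀ z, ((j z : V) : FractionRing O) = algebraMap O (FractionRing O) z := fun z => rfl
    have hj : Function.Injective j := by
      intro z w h
      apply IsFractionRing.injective O (FractionRing O)
      rw [← hjv, ← hjv, h]
    have hjl : IsLocalHom j := hVloc
    obtain ⟨t, ht0, ht, hta⟩ := uniformizer j hj (by
      intro v
      obtain ⟨z, c, hc, h⟩ := IsFractionRing.div_surjective (A := O) (v : FractionRing O)
      have hc0 : c ≠ 0 := nonZeroDivisors.ne_zero hc
      refine ⟨c, hc0, z, ?_⟩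
      apply Subtype.ext
      have hc' : algebraMap O (FractionRing O) c ≠ 0 := by
        simpa using hc0
      change algebraMap O (FractionRing O) z = algebraMap O (FractionRing O) c * v
      rw [← h]
      field_simp) hlen x hx (fun hu => hxm (isUnit_of_map_unit j _ hu))
    let f : A →+* V := j.comp (Ideal.Quotient.mk p)
    let _ : Algebra k V := (f.comp (algebraMap k A)).toAlgebra
    have haO : Ideal.Quotient.mk p a ≠ 0 := by
      intro h
      exact hap (Ideal.mul_mem_right _ _ (Ideal.Quotient.eq_zero_iff_mem.1 h))
    obtain ⟨n, hn⟩ := hta _ haO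
    refine ⟨V, inferInstance, inferInstance, { f with commutes' := fun _ => rfl }, t, n, ?_, ?_, ?_, ?_⟩
    · intro z hz
      exact (mul_eq_zero.1 hz).resolve_left ht0
    · rw [← ht]; infer_instance
    · intro z hz
      rw [← ht]
      intro hu
      exact hz (isUnit_of_map_unit (Ideal.Quotient.mk p) _ (isUnit_of_map_unit j _ hu))
    · rw [Ideal.span_singleton_pow, Ideal.mem_span_singleton]
      exact hn

/-- the ideal `I ⊗ B + A ⊗ J` -/
noncomputable def tIdeal (k : Type*) {A B : Type*} [Field k] [CommRing A] [CommRing B]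
    [Algebra k A] [Algebra k B] (I : Ideal A) (J : Ideal B) : Ideal (A ⊗[k] B) :=
  Ideal.map (Algebra.TensorProduct.includeLeft (R := k) (S := k) (A := A) (B := B)) I ⊔
    Ideal.map (Algebra.TensorProduct.includeRight (R := k) (A := A) (B := B)) J

section
variable {k A B : Type*} [Field k] [CommRing A] [CommRing B] [Algebra k A] [Algebra k B]

theorem tIdeal_pow_le (I : Ideal A) (J : Ideal B) (i j : ℕ) :
    tIdeal k I J ^ (i + j) ≤ tIdeal k (I ^ i) (J ^ j) := by
  unfold tIdeal
  rw [Ideal.map_pow, Ideal.map_pow]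
  exact Ideal.sup_pow_add_le_pow_sup_pow

theorem tIdeal_pow_ge (I : Ideal A) (J : Ideal B) (n : ℕ) :
    tIdeal k (I ^ n) (J ^ n) ≤ tIdeal k I J ^ n := by
  unfold tIdeal
  rw [Ideal.map_pow, Ideal.map_pow]
  exact sup_le (Ideal.pow_right_mono le_sup_left n) (Ideal.pow_right_mono le_sup_right n)

theorem tIdeal_map_le {R R' : Type*} [CommRing R] [CommRing R'] [Algebra k R] [Algebra k R']
    (φ : A →ₐ[k] R) (ψ : B →ₐ[k] R') (I : Ideal A) (J : Ideal B) (I' : Ideal R) (J' : Ideal R')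
    (hI : ∀ x ∈ I, φ x ∈ I') (hJ : ∀ x ∈ J, ψ x ∈ J') :
    tIdeal k I J ≤ (tIdeal k I' J').comap (Algebra.TensorProduct.map φ ψ) := by
  refine sup_le ?_ ?_
  · rw [Ideal.map_le_iff_le_comap]
    intro x hx
    rw [Ideal.mem_comap, Ideal.mem_comap]
    have := Ideal.mem_map_of_mem
      (Algebra.TensorProduct.includeLeft (R := k) (S := k) (A := R) (B := R')) (hI x hx)
    simpa [tIdeal] using Ideal.mem_sup_left this
  · rw [Ideal.map_le_iff_le_comap]
    intro x hx
    rw [Ideal.mem_comap, Ideal.mem_comap]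
    have := Ideal.mem_map_of_mem
      (Algebra.TensorProduct.includeRight (R := k) (A := R) (B := R')) (hJ x hx)
    simpa [tIdeal] using Ideal.mem_sup_right this

theorem tIdeal_span (t : A) (s : B) : tIdeal k (Ideal.span {t}) (Ideal.span {s}) =
    Ideal.span {t ⊗ₜ[k] (1 : B), (1 : A) ⊗ₜ[k] s} := by
  unfold tIdeal
  rw [Ideal.map_span, Ideal.map_span, ← Ideal.span_union]
  simp [Set.image_singleton, Set.pair_comm]

theorem sliceR_mem (w : B →ₗ[k] k) (I : Ideal A) (J : Ideal B) (hw : ∀ y ∈ J, w y = 0)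
    (x : A ⊗[k] B) (hx : x ∈ tIdeal k I J) : sliceR w x ∈ I := by
  obtain ⟨y, hy, z, hz, rfl⟩ := Submodule.mem_sup.1 hx
  rw [map_add]
  refine add_mem ?_ ?_
  · have h1 : y ∈ I • (⊤ : Submodule A (A ⊗[k] B)) := by
      rw [Ideal.smul_top_eq_map]
      exact hy
    have h2 := Submodule.mem_map_of_mem (f := sliceR w) h1
    rw [Submodule.map_smul''] at h2
    have h3 : sliceR w y ∈ I • (⊤ : Submodule A A) := Submodule.smul_mono le_rfl le_top h2
    simpa using h3
  · have : ∀ c, sliceR w (c * z) = 0 := by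
      refine Submodule.span_induction (p := fun z _ => ∀ c, sliceR w (c * z) = 0)
        ?_ ?_ ?_ ?_ hz
      · rintro _ ⟨b, hb, rfl⟩ c
        induction c with
        | zero => simp
        | tmul p q => simp [hw _ (J.mul_mem_left q hb)]
        | add p q hp hq => rw [add_mul, map_add, hp, hq, add_zero]
      · simp
      · intro p q _ _ hp hq c
        rw [mul_add, map_add, hp, hq, add_zero]
      · intro a p _ hp c
        rw [smul_eq_mul, ← mul_assoc, hp]
    have h := this 1
    rw [one_mul] at h
    rw [h]
    exact zero_mem _

theorem tensorFun_eq_zero (u : A →ₗ[k] k) (w : B →ₗ[k] k) (I : Ideal A) (J : Ideal B)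
    (hu : ∀ y ∈ I, u y = 0) (hw : ∀ y ∈ J, w y = 0)
    (x : A ⊗[k] B) (hx : x ∈ tIdeal k I J) : tensorFun u w x = 0 := by
  rw [tensorFun_eq_sliceR]
  exact hu _ (sliceR_mem w I J hw x hx)

theorem exists_tensorFun_of_notMem (I : Ideal A) (J : Ideal B) (x : A ⊗[k] B)
    (hx : x ∉ tIdeal k I J) : ∃ (u : A →ₗ[k] k) (w : B →ₗ[k] k), (∀ y ∈ I, u y = 0) ∧
      (∀ y ∈ J, w y = 0) ∧ tensorFun u w x ≠ 0 := by
  have h : Algebra.TensorProduct.map (Ideal.Quotient.mkₐ k I) (Ideal.Quotient.mkₐ k J) x ≠ 0 := by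
    intro h
    apply hx
    have h1 : x ∈ RingHom.ker
        (Algebra.TensorProduct.map (Ideal.Quotient.mkₐ k I) (Ideal.Quotient.mkₐ k J)) := h
    rw [Algebra.TensorProduct.map_ker _ _ (Ideal.Quotient.mkₐ_surjective k I)
      (Ideal.Quotient.mkₐ_surjective k J)] at h1
    have e1 : RingHom.ker (Ideal.Quotient.mkₐ k I) = I := Ideal.Quotient.mkₐ_ker k I
    have e2 : RingHom.ker (Ideal.Quotient.mkₐ k J) = J := Ideal.Quotient.mkₐ_ker k J
    rw [e1, e2] at h1
    exact h1
  obtain ⟨u, w, huw⟩ := exists_tensorFun_ne_zero _ h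
  refine ⟨u ∘ₗ (Ideal.Quotient.mkₐ k I).toLinearMap, w ∘ₗ (Ideal.Quotient.mkₐ k J).toLinearMap,
    ?_, ?_, ?_⟩
  · intro y hy
    have : Ideal.Quotient.mk I y = 0 := Ideal.Quotient.eq_zero_iff_mem.2 hy
    simp [this]
  · intro y hy
    have : Ideal.Quotient.mk J y = 0 := Ideal.Quotient.eq_zero_iff_mem.2 hy
    simp [this]
  · rw [← tensorFun_map]
    exact huw

theorem exists_fun_of_notMem (I : Ideal A) (x : A)
    (hx : x ∉ I) : ∃ (u : A →ₗ[k] k), (∀ y ∈ I, u y = 0) ∧ u x ≠ 0 := by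
  have h : (Ideal.Quotient.mkₐ k I) x ≠ 0 := by
    intro h
    exact hx (Ideal.Quotient.eq_zero_iff_mem.1 h)
  obtain ⟨u, hu⟩ : ∃ u : Module.Dual k (A ⧸ I), u (Ideal.Quotient.mkₐ k I x) ≠ 0 := by
    by_contra! h'
    exact h ((Module.forall_dual_apply_eq_zero_iff k _).1 h')
  refine ⟨u ∘ₗ (Ideal.Quotient.mkₐ k I).toLinearMap, ?_, hu⟩
  intro y hy
  have : Ideal.Quotient.mk I y = 0 := Ideal.Quotient.eq_zero_iff_mem.2 hy
  simp [this]

/-- Right slices converge. -/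
theorem exists_slice (I : Ideal A) (J : Ideal B) [IsAdicComplete I A] (c : ℕ → A ⊗[k] B)
    (hc : ∀ m n, m ≤ n → c n - c m ∈ tIdeal k I J ^ m) (w : B →ₗ[k] k) (j : ℕ)
    (hw : ∀ y ∈ J ^ j, w y = 0) :
    ∃ a : A, ∀ i, ∀ u : A →ₗ[k] k, (∀ y ∈ I ^ i, u y = 0) → tensorFun u w (c (i + j)) = u a := by
  obtain ⟨a, ha⟩ := IsPrecomplete.prec (I := I) (M := A) inferInstance
    (f := fun i => sliceR w (c (i + j))) (by
      intro m n hmn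
      rw [SModEq.comm, SModEq.sub_mem, ← map_sub]
      have := sliceR_mem w (I ^ m) (J ^ j) hw _
        (tIdeal_pow_le I J m j (hc (m + j) (n + j) (by omega)))
      simpa using this)
  refine ⟨a, fun i u hu => ?_⟩
  have h := ha i
  rw [SModEq.sub_mem] at h
  have h' := hu (sliceR w (c (i + j)) - a) (by simpa using h)
  rw [map_sub, sub_eq_zero] at h'
  rw [tensorFun_eq_sliceR, h']

theorem tensorFun_comm (u : A →ₗ[k] k) (w : B →ₗ[k] k) (x : A ⊗[k] B) :
    tensorFun w u (Algebra.TensorProduct.comm k A B x) = tensorFun u w x := by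
  induction x with
  | zero => simp
  | tmul x y => simp [mul_comm]
  | add x y hx hy => simp only [map_add, hx, hy]

theorem tIdeal_comm (I : Ideal A) (J : Ideal B) :
    tIdeal k I J ≤ (tIdeal k J I).comap (Algebra.TensorProduct.comm k A B) := by
  refine sup_le ?_ ?_
  · rw [Ideal.map_le_iff_le_comap]
    intro x hx
    rw [Ideal.mem_comap, Ideal.mem_comap]
    have := Ideal.mem_map_of_mem
      (Algebra.TensorProduct.includeRight (R := k) (A := B) (B := A)) hx
    simpa [tIdeal] using Ideal.mem_sup_right this
  · rw [Ideal.map_le_iff_le_comap]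
    intro x hx
    rw [Ideal.mem_comap, Ideal.mem_comap]
    have := Ideal.mem_map_of_mem
      (Algebra.TensorProduct.includeLeft (R := k) (S := k) (A := B) (B := A)) hx
    simpa [tIdeal] using Ideal.mem_sup_left this

/-- Left slices converge. -/
theorem exists_slice_left (I : Ideal A) (J : Ideal B) [IsAdicComplete J B] (c : ℕ → A ⊗[k] B)
    (hc : ∀ m n, m ≤ n → c n - c m ∈ tIdeal k I J ^ m) (u : A →ₗ[k] k) (i : ℕ)
    (hu : ∀ y ∈ I ^ i, u y = 0) :
    ∃ b : B, ∀ j, ∀ w : B →ₗ[k] k, (∀ y ∈ J ^ j, w y = 0) → tensorFun u w (c (i + j)) = w b := by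
  obtain ⟨b, hb⟩ := exists_slice (k := k) J I (fun n => Algebra.TensorProduct.comm k A B (c n)) (by
    intro m n hmn
    have h := hc m n hmn
    have h1 := Ideal.pow_right_mono (tIdeal_comm (k := k) I J) m h
    have h2 := Ideal.le_comap_pow _ m h1
    rw [Ideal.mem_comap, map_sub] at h2
    exact h2) u i hu
  refine ⟨b, fun j w hw => ?_⟩
  rw [← hb j w hw, tensorFun_comm, add_comm]

/-- Nonzero elements have a nonzero slice. -/
theorem exists_slice_ne_zero (I : Ideal A) (J : Ideal B) [IsAdicComplete I A] (c : ℕ → A ⊗[k] B)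
    (hc : ∀ m n, m ≤ n → c n - c m ∈ tIdeal k I J ^ m) (n : ℕ) (hn : c n ∉ tIdeal k I J ^ n) :
    ∃ (w : B →ₗ[k] k) (j : ℕ) (a : A), a ≠ 0 ∧ (∀ y ∈ J ^ j, w y = 0) ∧
      ∀ i, ∀ u : A →ₗ[k] k, (∀ y ∈ I ^ i, u y = 0) → tensorFun u w (c (i + j)) = u a := by
  have h1 : c (n + n) ∉ tIdeal k (I ^ n) (J ^ n) := by
    intro h
    apply hn
    have h2 := tIdeal_pow_ge I J n h
    have h3 := sub_mem h2 (hc n (n + n) (by omega))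
    simpa using h3
  obtain ⟨u, w, hu, hw, huw⟩ := exists_tensorFun_of_notMem _ _ _ h1
  obtain ⟨a, ha⟩ := exists_slice I J c hc w n hw
  refine ⟨w, n, a, ?_, hw, ha⟩
  rintro rfl
  apply huw
  rw [ha n u hu, map_zero]

/-- transfer along a curve on the left -/
theorem exists_left {R : Type*} [CommRing R] [Algebra k R] (I : Ideal A) (J : Ideal B)
    [IsAdicComplete J B] (c : ℕ → A ⊗[k] B)
    (hc : ∀ m n, m ≤ n → c n - c m ∈ tIdeal k I J ^ m) (w : B →ₗ[k] k) (j : ℕ) (a : A)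
    (hw : ∀ y ∈ J ^ j, w y = 0)
    (ha : ∀ i, ∀ u : A →ₗ[k] k, (∀ y ∈ I ^ i, u y = 0) → tensorFun u w (c (i + j)) = u a)
    (φ : A →ₐ[k] R) (K : Ideal R) (hφ : ∀ y ∈ I, φ y ∈ K) (e : ℕ) (he : φ a ∉ K ^ e) :
    ∃ (u : R →ₗ[k] k) (b : B), b ≠ 0 ∧ (∀ y ∈ K ^ e, u y = 0) ∧
      ∀ j, ∀ w : B →ₗ[k] k, (∀ y ∈ J ^ j, w y = 0) →
        tensorFun (u ∘ₗ φ.toLinearMap) w (c (e + j)) = w b := by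
  obtain ⟨u, hu, hua⟩ := exists_fun_of_notMem (k := k) _ _ he
  have hle : I ≤ K.comap φ := hφ
  have hu' : ∀ y ∈ I ^ e, (u ∘ₗ φ.toLinearMap) y = 0 := by
    intro y hy
    exact hu _ (Ideal.le_comap_pow φ e (Ideal.pow_right_mono hle e hy))
  obtain ⟨b, hb⟩ := exists_slice_left I J c hc _ e hu'
  refine ⟨u, b, ?_, hu, hb⟩
  rintro rfl
  apply hua
  have h1 := ha e _ hu'
  rw [hb j w hw, map_zero] at h1
  exact h1.symm

theorem exists_notMem {R R' : Type*} [CommRing R] [Algebra k R] [CommRing R'] [Algebra k R']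
    (I : Ideal A) (J : Ideal B)
    (c : ℕ → A ⊗[k] B) 
    (φ : A →ₐ[k] R) (K : Ideal R) (e : ℕ) (u : R →ₗ[k] k) (b : B) (hu : ∀ y ∈ K ^ e, u y = 0)
    (hb : ∀ j, ∀ w : B →ₗ[k] k, (∀ y ∈ J ^ j, w y = 0) →
        tensorFun (u ∘ₗ φ.toLinearMap) w (c (e + j)) = w b)
    (ψ : B →ₐ[k] R') (K' : Ideal R') (hψ : ∀ y ∈ J, ψ y ∈ K') (e' : ℕ) (he' : ψ b ∉ K' ^ e') :
    Algebra.TensorProduct.map φ ψ (c (e + e')) ∉ tIdeal k K K' ^ (e + e') := by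
  intro hmem
  obtain ⟨w, hw, hwb⟩ := exists_fun_of_notMem (k := k) _ _ he'
  have hle : J ≤ K'.comap ψ := hψ
  have hw' : ∀ y ∈ J ^ e', (w ∘ₗ ψ.toLinearMap) y = 0 := by
    intro y hy
    exact hw _ (Ideal.le_comap_pow ψ e' (Ideal.pow_right_mono hle e' hy))
  apply hwb
  have h1 := hb e' _ hw'
  rw [← tensorFun_map] at h1
  have h2 := tensorFun_eq_zero u w _ _ hu hw _ (tIdeal_pow_le K K' e e' hmem)
  exact h1.symm.trans h2

end

theorem main_aux (k A B : Type*) [Field k] [IsAlgClosed k]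
    [CommRing A] [CommRing B] [IsNoetherianRing A] [IsNoetherianRing B]
    [IsLocalRing A] [IsLocalRing B]
    [IsAdicComplete (IsLocalRing.maximalIdeal A) A]
    [IsAdicComplete (IsLocalRing.maximalIdeal B) B]
    [Algebra k A] [Algebra k B]
    [IsDomain A] [IsDomain B] (r : Ideal (A ⊗[k] B))
    (hr : r = tIdeal k (IsLocalRing.maximalIdeal A) (IsLocalRing.maximalIdeal B))
    (c d : ℕ → A ⊗[k] B)
    (hc : ∀ m n, m ≤ n → c n - c m ∈ r ^ m) (hd : ∀ m n, m ≤ n → d n - d m ∈ r ^ m)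
    (n n' : ℕ) (hn : c n ∉ r ^ n) (hn' : d n' ∉ r ^ n') : ∃ N, c N * d N ∉ r ^ N := by
  subst hr
  obtain ⟨w, j, a, ha, hw, hwa⟩ := exists_slice_ne_zero _ _ c hc n hn
  obtain ⟨w', j', a', ha', hw', hwa'⟩ := exists_slice_ne_zero _ _ d hd n' hn'
  obtain ⟨R, _, _, φ, t, e, ht, htp, hφ, hφa⟩ := exists_curve k A (a * a') (mul_ne_zero ha ha')
  rw [map_mul] at hφa
  obtain ⟨u, b, hb, hu, hub⟩ := exists_left _ _ c hc w j a hw hwa φ _ hφ e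
    (fun h => hφa (Ideal.mul_mem_right _ _ h))
  obtain ⟨u', b', hb', hu', hub'⟩ := exists_left _ _ d hd w' j' a' hw' hwa' φ _ hφ e
    (fun h => hφa (Ideal.mul_mem_left _ _ h))
  obtain ⟨R', _, _, ψ, s, e', hs, hsp, hψ, hψb⟩ := exists_curve k B (b * b') (mul_ne_zero hb hb')
  rw [map_mul] at hψb
  have h1 := exists_notMem (IsLocalRing.maximalIdeal A) _ c φ _ e u b hu hub ψ _ hψ e'
    (fun h => hψb (Ideal.mul_mem_right _ _ h))
  have h2 := exists_notMem (IsLocalRing.maximalIdeal A) _ d φ _ e u' b' hu' hub' ψ _ hψ e'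
    (fun h => hψb (Ideal.mul_mem_left _ _ h))
  have hmap : ∀ N, ∀ x ∈ tIdeal k (IsLocalRing.maximalIdeal A) (IsLocalRing.maximalIdeal B) ^ N,
      Algebra.TensorProduct.map φ ψ x ∈ tIdeal k (Ideal.span {t}) (Ideal.span {s}) ^ N := by
    intro N x hx
    exact Ideal.le_comap_pow _ N (Ideal.pow_right_mono (tIdeal_map_le φ ψ _ _ _ _ hφ hψ) N hx)
  refine ⟨(e + e') + (e + e'), fun h => ?_⟩
  have h3 := hmap _ _ h
  rw [map_mul] at h3
  have key : ∀ c : ℕ → A ⊗[k] B, (∀ m n, m ≤ n → c n - c m ∈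
      tIdeal k (IsLocalRing.maximalIdeal A) (IsLocalRing.maximalIdeal B) ^ m) →
      Algebra.TensorProduct.map φ ψ (c (e + e')) ∉
        tIdeal k (Ideal.span {t}) (Ideal.span {s}) ^ (e + e') →
      Algebra.TensorProduct.map φ ψ (c (e + e' + (e + e'))) ∉
        tIdeal k (Ideal.span {t}) (Ideal.span {s}) ^ (e + e') := by
    intro c hc h hm
    apply h
    have h4 := hmap _ _ (hc (e + e') (e + e' + (e + e')) (by omega))
    rw [map_sub] at h4
    have h5 := sub_mem hm h4
    simpa using h5
  have h1' := key c hc h1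
  have h2' := key d hd h2
  rw [tIdeal_span] at h1' h2' h3
  exact order_mul_tensor k R R' t s ht hs htp hsp _ _ _ _ h1' h2' h3

theorem tIdeal_ne_top (k : Type*) {A B : Type*} [Field k] [CommRing A] [CommRing B]
    [Algebra k A] [Algebra k B] (I : Ideal A) (J : Ideal B) (hI : I ≠ ⊤) (hJ : J ≠ ⊤) :
    tIdeal k I J ≠ ⊤ := by
  intro h
  obtain ⟨u, hu, hu1⟩ := exists_fun_of_notMem (k := k) I 1 ((Ideal.ne_top_iff_one _).1 hI)
  obtain ⟨w, hw, hw1⟩ := exists_fun_of_notMem (k := k) J 1 ((Ideal.ne_top_iff_one _).1 hJ)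
  have := tensorFun_eq_zero u w I J hu hw (1 ⊗ₜ 1) (by rw [h]; trivial)
  rw [tensorFun_tmul] at this
  exact mul_ne_zero hu1 hw1 this

/-- **Statement 19.** Let `k` be an algebraically closed field and `A` and `B` two
complete Noetherian local commutative rings containing `k` such that `A ⊗̂[k] B` is
Noetherian. If `A` and `B` are integral domains, then so is `A ⊗̂[k] B`. -/
theorem isDomain_completedTensor (k A B : Type*) [Field k] [IsAlgClosed k]
    [CommRing A] [CommRing B] [IsNoetherianRing A] [IsNoetherianRing B]
    [IsLocalRing A] [IsLocalRing B]
    [IsAdicComplete (IsLocalRing.maximalIdeal A) A]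
    [IsAdicComplete (IsLocalRing.maximalIdeal B) B]
    [Algebra k A] [Algebra k B]
    [IsDomain A] [IsDomain B]
    (hE : IsNoetherianRing (CompletedTensor k A B)) :
    IsDomain (CompletedTensor k A B) := by
  have hr : tensorRadical k A B =
      tIdeal k (IsLocalRing.maximalIdeal A) (IsLocalRing.maximalIdeal B) := by
    unfold tensorRadical tIdeal
    rw [IsLocalRing.jacobson_eq_maximalIdeal (⊥ : Ideal A) bot_ne_top,
      IsLocalRing.jacobson_eq_maximalIdeal (⊥ : Ideal B) bot_ne_top]
  have hrt : tensorRadical k A B ≠ ⊤ := by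
    rw [hr]
    exact tIdeal_ne_top k _ _ (Ideal.IsPrime.ne_top inferInstance)
      (Ideal.IsPrime.ne_top inferInstance)
  have hnt : Nontrivial (CompletedTensor k A B) := by
    refine ⟨⟨1, 0, fun h => hrt ?_⟩⟩
    have h1 := congrArg (AdicCompletion.evalₐ (tensorRadical k A B) 1) h
    rw [map_one, map_zero] at h1
    rw [Ideal.eq_top_iff_one]
    have h2 := Ideal.Quotient.eq_zero_iff_mem.1
      (show Ideal.Quotient.mk (tensorRadical k A B ^ 1) 1 = 0 by rw [map_one]; exact h1)
    simpa using h2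
  have hcau : ∀ c : AdicCompletion.AdicCauchySequence (tensorRadical k A B) (A ⊗[k] B),
      ∀ m n, m ≤ n → c.val n - c.val m ∈ tensorRadical k A B ^ m := by
    intro c m n hmn
    have h := (c.property hmn).symm
    rw [SModEq.sub_mem] at h
    simpa using h
  have hne : ∀ c : AdicCompletion.AdicCauchySequence (tensorRadical k A B) (A ⊗[k] B),
      AdicCompletion.mk _ _ c ≠ 0 → ∃ n, c.val n ∉ tensorRadical k A B ^ n := by
    intro c hc
    by_contra! h
    apply hc
    apply AdicCompletion.ext_evalₐ
    intro n
    rw [AdicCompletion.evalₐ_mk, map_zero, Ideal.Quotient.eq_zero_iff_mem]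
    exact h n
  have hnz : NoZeroDivisors (CompletedTensor k A B) := by
    refine ⟨fun {f g} hfg => ?_⟩
    by_contra! hcon
    obtain ⟨hf, hg⟩ := hcon
    obtain ⟨c, rfl⟩ := AdicCompletion.mk_surjective _ _ f
    obtain ⟨d, rfl⟩ := AdicCompletion.mk_surjective _ _ g
    obtain ⟨n, hn⟩ := hne c hf
    obtain ⟨n', hn'⟩ := hne d hg
    obtain ⟨N, hN⟩ := main_aux k A B _ hr c.val d.val (hcau c) (hcau d) n n' hn hn'
    apply hN
    have h1 := congrArg (AdicCompletion.evalₐ (tensorRadical k A B) N) hfg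
    rw [map_mul, AdicCompletion.evalₐ_mk, AdicCompletion.evalₐ_mk, map_zero, ← map_mul] at h1
    exact Ideal.Quotient.eq_zero_iff_mem.1 h1
  exact NoZeroDivisors.to_isDomain _
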